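/- Let n ≥ 2, m ≥ 1, and let 𝔹 be the open unit ball in ℝⁿ. For x ∈ 𝔹 with r = |x|, let 𝒦_{m,n}(x) be the smallest constant such that max_{|ℓ|=1} |(ℓ, ∇)u(x)| ≤ 𝒦_{m,n}(x)·‖g‖_{[L^∞(S^{n−1})]^m} for every u that is the Poisson integral over S^{n−1} of g ∈ [L^∞(S^{n−1})]^m. Then 𝒦_{m,n}(x) = (1/ω_n) sup_{|ℓ|=1} ∫_{S^{n−1}} |( n(1−r²)(y−x) − 2|y−x|² x , ℓ)| / |y−x|^{n+2} dσ_y; in particular 𝒦_{m,n}(x) does not depend on m. -/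

import Mathlib

open MeasureTheory Real Filter Metric
open scoped Real RealInnerProductSpace

noncomputable section

/-- `Eu n` is the Euclidean space `ℝⁿ`. -/
abbrev Eu (n : ℕ) := EuclideanSpace ℝ (Fin n)

/-- `ω_n`: the surface area of the unit sphere `S^{n-1}` in `ℝⁿ`,
given by the classical formula `2 π^{n/2} / Γ(n/2)`. -/
def sphereArea (n : ℕ) : ℝ := 2 * π ^ ((n : ℝ) / 2) / Real.Gamma ((n : ℝ) / 2)

/-- The Poisson integral `u(x) = (1/ωₙ) ∫_{S^{n-1}} ((1-|x|²)/|y-x|ⁿ) g(y) dσ_y` of a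
vector-valued boundary function `g : S^{n-1} → ℝ^m`. -/
def poissonBallV {n m : ℕ} (g : Metric.sphere (0 : Eu n) 1 → Eu m) (x : Eu n) : Eu m :=
  (1 / sphereArea n) • ∫ y : Metric.sphere (0 : Eu n) 1,
    ((1 - ‖x‖ ^ 2) / ‖(y : Eu n) - x‖ ^ n) • g y ∂(volume.toSphere)

/-- The claimed value of the sharp coefficient `𝒦_{m,n}(x)`
(which does not depend on `m`). -/
def Kmn (n : ℕ) (x : Eu n) : ℝ :=
  (1 / sphereArea n) * ⨆ ℓ : Metric.sphere (0 : Eu n) 1,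
    ∫ y : Metric.sphere (0 : Eu n) 1,
      |⟪((n : ℝ) * (1 - ‖x‖ ^ 2)) • ((y : Eu n) - x) - (2 * ‖(y : Eu n) - x‖ ^ 2) • x,
          (ℓ : Eu n)⟫| / ‖(y : Eu n) - x‖ ^ (n + 2)
      ∂volume.toSphere

/-!
Differentiating the Poisson integral under the integral sign gives
`(ℓ, ∇)u(x) = ∫ ⟪G(y), ℓ⟫ g(y) dμ(y)`, where `G(y)` is the gradient at `x` of the Poisson kernel
with pole `y`. For fixed `ℓ` the norm of this integral over all `|g| ≤ 1` is at most
`∫ |⟪G(y), ℓ⟫| dμ(y)`, with equality for `g = sign ⟪G, ℓ⟫ · e`, `e` a fixed unit vector of the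
target space. Taking the supremum over `ℓ` yields the sharp constant; the target enters only
through the existence of `e`, hence the constant does not depend on `m`.
-/

section DualNorm

variable {Ω F : Type*} [MeasurableSpace Ω] {μ : Measure Ω}
  [NormedAddCommGroup F] [NormedSpace ℝ F]

lemma norm_integral_smul_le_mul_integral_abs {f : Ω → ℝ} {g : Ω → F} {C : ℝ} (hf : Integrable f μ)
    (hg : ∀ᵐ y ∂μ, ‖g y‖ ≤ C) : ‖∫ y, f y • g y ∂μ‖ ≤ C * ∫ y, |f y| ∂μ := by
  rw [← integral_const_mul]
  refine norm_integral_le_of_norm_le (hf.abs.const_mul C) ?_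
  filter_upwards [hg] with y hy
  rw [norm_smul, Real.norm_eq_abs, mul_comm]
  gcongr

/-- `f y / |f y|` is the sign of `f y`, including the value `0` where `f` vanishes. -/
lemma norm_integral_smul_div_abs_smul [CompleteSpace F] (f : Ω → ℝ) {e : F} (he : ‖e‖ = 1) :
    ‖∫ y, f y • (f y / |f y|) • e ∂μ‖ = ∫ y, |f y| ∂μ := by
  have mul_sign (t : ℝ) : t * (t / |t|) = |t| := by
    rw [← mul_div_assoc, ← abs_mul_abs_self, mul_self_div_self]
  simp_rw [smul_smul, mul_sign]
  rw [integral_smul_const, norm_smul, he, mul_one,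
    Real.norm_of_nonneg (integral_nonneg fun _ => abs_nonneg _)]

lemma norm_div_abs_smul_le_one (t : ℝ) {e : F} (he : ‖e‖ = 1) : ‖(t / |t|) • e‖ ≤ 1 := by
  rw [norm_smul, he, mul_one, Real.norm_eq_abs, abs_div, abs_abs]
  exact div_self_le_one _

variable {E : Type*} [NormedAddCommGroup E] [InnerProductSpace ℝ E]

lemma bddAbove_range_integral_abs_inner {G : Ω → E} (hG : Integrable G μ) :
    BddAbove (Set.range fun ℓ : sphere (0 : E) 1 => ∫ y, |⟪G y, (ℓ : E)⟫| ∂μ) := by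
  refine ⟨∫ y, ‖G y‖ ∂μ, ?_⟩
  rintro _ ⟨ℓ, rfl⟩
  refine integral_mono (hG.inner_const (ℓ : E)).abs hG.norm fun y => ?_
  simpa only [norm_eq_of_mem_sphere, mul_one] using abs_real_inner_le_norm (G y) (ℓ : E)

theorem isLeast_iSup_integral_abs_inner [Nontrivial E] [CompleteSpace F] [Nontrivial F]
    {G : Ω → E} (hG : StronglyMeasurable G) (hGi : Integrable G μ) :
    IsLeast {c : ℝ | ∀ g : Ω → F, StronglyMeasurable g → (∀ᵐ y ∂μ, ‖g y‖ ≤ 1) →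
        ∀ ℓ : E, ‖ℓ‖ = 1 → ‖∫ y, ⟪G y, ℓ⟫ • g y ∂μ‖ ≤ c}
      (⨆ ℓ : sphere (0 : E) 1, ∫ y, |⟪G y, (ℓ : E)⟫| ∂μ) := by
  constructor
  · intro g _ hg ℓ hℓ
    calc ‖∫ y, ⟪G y, ℓ⟫ • g y ∂μ‖
        ≤ 1 * ∫ y, |⟪G y, ℓ⟫| ∂μ :=
          norm_integral_smul_le_mul_integral_abs (hGi.inner_const ℓ) hg
      _ ≤ ⨆ ℓ : sphere (0 : E) 1, ∫ y, |⟪G y, (ℓ : E)⟫| ∂μ := by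
          rw [one_mul]
          exact le_ciSup (bddAbove_range_integral_abs_inner hGi) ⟨ℓ, mem_sphere_zero_iff_norm.2 hℓ⟩
  · intro c hc
    have : Nonempty (sphere (0 : E) 1) := (NormedSpace.sphere_nonempty.2 zero_le_one).to_subtype
    obtain ⟨e, he⟩ := exists_norm_eq F zero_le_one
    refine ciSup_le fun ℓ => ?_
    have hf : StronglyMeasurable fun y => ⟪G y, (ℓ : E)⟫ := hG.inner stronglyMeasurable_const
    have hsign : StronglyMeasurable fun y => (⟪G y, (ℓ : E)⟫ / |⟪G y, (ℓ : E)⟫|) • e :=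
      (hf.measurable.div hf.measurable.abs).stronglyMeasurable.smul_const e
    rw [← norm_integral_smul_div_abs_smul _ he]
    exact hc _ hsign (.of_forall fun y => norm_div_abs_smul_le_one _ he) ℓ (norm_eq_of_mem_sphere ℓ)

end DualNorm

section Kernel

variable {E : Type*} [NormedAddCommGroup E]

lemma ne_of_norm_lt_one_of_norm_eq_one {x y : E} (hx : ‖x‖ < 1) (hy : ‖y‖ = 1) : y ≠ x :=
  fun h => hx.ne (h ▸ hy)

lemma one_sub_norm_le_norm_sub (x : E) {y : E} (hy : ‖y‖ = 1) : 1 - ‖x‖ ≤ ‖y - x‖ :=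
  hy ▸ norm_sub_norm_le y x

/-- The kernel `(1 - |x|²) / |y - x|ᵏ` with pole `y`. For `k = dim E` and `|y| = 1` it is the
Poisson kernel of the unit ball, without the factor `1 / ωₙ`. -/
def ballPoissonKernel (k : ℕ) (x y : E) : ℝ := (1 - ‖x‖ ^ 2) / ‖y - x‖ ^ k

lemma abs_ballPoissonKernel_le (k : ℕ) {x y : E} (hx : ‖x‖ < 1) (hy : ‖y‖ = 1) :
    |ballPoissonKernel k x y| ≤ 1 / (1 - ‖x‖) ^ k := by
  have hnum : 0 ≤ 1 - ‖x‖ ^ 2 := sub_nonneg.2 (pow_le_one₀ (norm_nonneg x) hx.le)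
  have hdist := one_sub_norm_le_norm_sub x hy
  have : 0 < 1 - ‖x‖ := sub_pos.2 hx
  rw [ballPoissonKernel, abs_of_nonneg (by positivity)]
  gcongr
  exact sub_le_self _ (sq_nonneg _)

lemma continuousOn_ballPoissonKernel (k : ℕ) (x : E) :
    ContinuousOn (ballPoissonKernel k x) {x}ᶜ :=
  continuousOn_const.div (by fun_prop) fun _ hy => pow_ne_zero k (norm_sub_pos_iff.2 hy).ne'

lemma continuous_restrict_sphere_ballPoissonKernel (k : ℕ) {x : E} (hx : ‖x‖ < 1) :
    Continuous fun y : sphere (0 : E) 1 => ballPoissonKernel k x y :=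
  (continuousOn_ballPoissonKernel k x).comp_continuous continuous_subtype_val fun y =>
    ne_of_norm_lt_one_of_norm_eq_one hx (norm_eq_of_mem_sphere y)

variable [InnerProductSpace ℝ E]

/-- The gradient of `ballPoissonKernel k x y` with respect to `x`, for `x ≠ y`. -/
def ballPoissonKernelGrad (k : ℕ) (x y : E) : E :=
  (‖y - x‖ ^ (k + 2))⁻¹ • ((k * (1 - ‖x‖ ^ 2)) • (y - x) - (2 * ‖y - x‖ ^ 2) • x)

lemma hasFDerivAt_norm_sub {x y : E} (hxy : y ≠ x) :
    HasFDerivAt (fun z => ‖y - z‖) (-(‖y - x‖⁻¹ • innerSL ℝ (y - x))) x := by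
  have hpos : 0 < ‖y - x‖ := norm_sub_pos_iff.2 hxy
  have hsq : HasFDerivAt (fun z => ‖y - z‖ ^ 2) _ x := ((hasFDerivAt_id x).const_sub y).norm_sq
  have hsqrt := hsq.sqrt (pow_pos hpos 2).ne'
  simp only [Real.sqrt_sq (norm_nonneg _)] at hsqrt
  refine hsqrt.congr_fderiv ?_
  ext v
  simp only [id_eq, map_sub, ContinuousLinearMap.comp_neg, ContinuousLinearMap.comp_id,
    smul_apply, sub_apply, neg_apply, coe_innerSL_apply, nsmul_eq_mul, Nat.cast_ofNat, smul_eq_mul]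
  field_simp

lemma hasFDerivAt_inv_norm_sub_pow (k : ℕ) {x y : E} (hxy : y ≠ x) :
    HasFDerivAt (fun z => (‖y - z‖ ^ k)⁻¹)
      ((k / ‖y - x‖ ^ (k + 2)) • innerSL ℝ (y - x)) x := by
  have hne : ‖y - x‖ ≠ 0 := (norm_sub_pos_iff.2 hxy).ne'
  refine ((hasDerivAt_inv (pow_ne_zero k hne)).comp_hasFDerivAt x
    ((hasFDerivAt_norm_sub hxy).pow k)).congr_fderiv ?_
  cases k with
  | zero => simp
  | succ j =>
    ext v
    simp only [add_tsub_cancel_right, nsmul_eq_mul, Nat.cast_add, Nat.cast_one, smul_neg, neg_smul,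
      neg_neg, smul_apply, coe_innerSL_apply, smul_eq_mul]
    field_simp
    ring

lemma hasFDerivAt_ballPoissonKernel (k : ℕ) {x y : E} (hxy : y ≠ x) :
    HasFDerivAt (ballPoissonKernel k · y) (innerSL ℝ (ballPoissonKernelGrad k x y)) x := by
  have hne : ‖y - x‖ ≠ 0 := (norm_sub_pos_iff.2 hxy).ne'
  have hnum : HasFDerivAt (fun z : E => 1 - ‖z‖ ^ 2) _ x := (hasFDerivAt_id x).norm_sq.const_sub 1
  simp only [ballPoissonKernel, div_eq_mul_inv]
  refine (hnum.mul (hasFDerivAt_inv_norm_sub_pow k hxy)).congr_fderiv ?_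
  ext v
  simp only [ballPoissonKernelGrad, id_eq, ContinuousLinearMap.comp_id, map_smul, map_sub, smul_neg,
    add_apply, sub_apply, neg_apply, smul_apply, coe_innerSL_apply, smul_eq_mul, nsmul_eq_mul,
    Nat.cast_ofNat]
  field_simp
  ring

lemma norm_ballPoissonKernelGrad_le (k : ℕ) {x y : E} (hx : ‖x‖ < 1) (hy : ‖y‖ = 1) :
    ‖ballPoissonKernelGrad k x y‖ ≤ (2 * k + 2) / (1 - ‖x‖) ^ k := by
  have hdist := one_sub_norm_le_norm_sub x hy
  have hpos : 0 < 1 - ‖x‖ := sub_pos.2 hx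
  have hdist_pos : 0 < ‖y - x‖ := hpos.trans_le hdist
  have hone_sub_sq : |1 - ‖x‖ ^ 2| ≤ 2 * ‖y - x‖ := by
    rw [abs_of_nonneg (by nlinarith [norm_nonneg x])]
    nlinarith
  have hnum : ‖((k : ℝ) * (1 - ‖x‖ ^ 2)) • (y - x) - (2 * ‖y - x‖ ^ 2) • x‖
      ≤ (2 * k + 2) * ‖y - x‖ ^ 2 := by
    calc _ ≤ k * |1 - ‖x‖ ^ 2| * ‖y - x‖ + 2 * ‖y - x‖ ^ 2 * ‖x‖ := by
          refine (norm_sub_le _ _).trans_eq ?_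
          rw [norm_smul, norm_smul, norm_mul, norm_mul, norm_pow, norm_norm, Real.norm_natCast,
            Real.norm_ofNat, Real.norm_eq_abs]
      _ ≤ k * (2 * ‖y - x‖) * ‖y - x‖ + 2 * ‖y - x‖ ^ 2 * 1 := by gcongr
      _ = (2 * k + 2) * ‖y - x‖ ^ 2 := by ring
  calc ‖ballPoissonKernelGrad k x y‖
      ≤ (‖y - x‖ ^ (k + 2))⁻¹ * ((2 * k + 2) * ‖y - x‖ ^ 2) := by
        rw [ballPoissonKernelGrad, norm_smul, norm_inv, norm_pow, norm_norm]
        gcongr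
    _ = (2 * k + 2) / ‖y - x‖ ^ k := by field_simp; ring
    _ ≤ (2 * k + 2) / (1 - ‖x‖) ^ k := by gcongr

lemma continuousOn_ballPoissonKernelGrad (k : ℕ) (x : E) :
    ContinuousOn (ballPoissonKernelGrad k x) {x}ᶜ :=
  .smul (.inv₀ (by fun_prop) fun _ hy => pow_ne_zero _ (norm_sub_pos_iff.2 hy).ne') (by fun_prop)

lemma continuous_restrict_sphere_ballPoissonKernelGrad (k : ℕ) {x : E} (hx : ‖x‖ < 1) :
    Continuous fun y : sphere (0 : E) 1 => ballPoissonKernelGrad k x y :=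
  (continuousOn_ballPoissonKernelGrad k x).comp_continuous continuous_subtype_val fun y =>
    ne_of_norm_lt_one_of_norm_eq_one hx (norm_eq_of_mem_sphere y)

end Kernel

section Integral

variable {E F : Type*} [NormedAddCommGroup E] [MeasurableSpace E]
  [NormedAddCommGroup F] [NormedSpace ℝ F]
  {μ : Measure (sphere (0 : E) 1)} {g : sphere (0 : E) 1 → F} {x : E}

/-- The integral of `g` over the unit sphere against `ballPoissonKernel k x`. The Poisson integral
is the case where `k = dim E` and `μ` is the surface measure divided by `ωₙ`. -/
def ballPoissonIntegral (k : ℕ) (μ : Measure (sphere (0 : E) 1)) (g : sphere (0 : E) 1 → F)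
    (x : E) : F :=
  ∫ y, ballPoissonKernel k x y • g y ∂μ

variable [OpensMeasurableSpace E]

lemma integrable_ballPoissonKernel [IsFiniteMeasure μ] (k : ℕ) (hx : ‖x‖ < 1) :
    Integrable (fun y : sphere (0 : E) 1 => ballPoissonKernel k x y) μ :=
  .of_bound (continuous_restrict_sphere_ballPoissonKernel k hx).aestronglyMeasurable _
    (.of_forall fun y => abs_ballPoissonKernel_le k hx (norm_eq_of_mem_sphere y))

variable [InnerProductSpace ℝ E] [SecondCountableTopology E]

lemma integrable_ballPoissonKernelGrad [IsFiniteMeasure μ] (k : ℕ) (hx : ‖x‖ < 1) :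
    Integrable (fun y : sphere (0 : E) 1 => ballPoissonKernelGrad k x y) μ :=
  .of_bound (continuous_restrict_sphere_ballPoissonKernelGrad k hx).aestronglyMeasurable _
    (.of_forall fun y => norm_ballPoissonKernelGrad_le k hx (norm_eq_of_mem_sphere y))

lemma integrable_smulRight_ballPoissonKernelGrad [IsFiniteMeasure μ] (k : ℕ) (hx : ‖x‖ < 1) {C : ℝ}
    (hg : AEStronglyMeasurable g μ) (hgC : ∀ᵐ y ∂μ, ‖g y‖ ≤ C) :
    Integrable (fun y : sphere (0 : E) 1 =>
      (innerSL ℝ (ballPoissonKernelGrad k x y)).smulRight (g y)) μ := by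
  have hinner := (innerSL ℝ).integrable_comp (integrable_ballPoissonKernelGrad (μ := μ) k hx)
  refine (hinner.norm.mul_const C).mono'
    ((ContinuousLinearMap.smulRightL ℝ E F).aestronglyMeasurable_comp₂ hinner.1 hg) ?_
  filter_upwards [hgC] with y hy
  rw [ContinuousLinearMap.norm_smulRight_apply]
  gcongr

theorem hasFDerivAt_ballPoissonIntegral [IsFiniteMeasure μ] (k : ℕ) (hx : ‖x‖ < 1) {C : ℝ}
    (hg : AEStronglyMeasurable g μ) (hgC : ∀ᵐ y ∂μ, ‖g y‖ ≤ C) :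
    HasFDerivAt (ballPoissonIntegral k μ g)
      (∫ y, (innerSL ℝ (ballPoissonKernelGrad k x y)).smulRight (g y) ∂μ) x := by
  obtain ⟨r, hxr, hr⟩ := exists_between hx
  have hlt {z : E} (hz : z ∈ ball 0 r) : ‖z‖ < 1 := (mem_ball_zero_iff.1 hz).trans hr
  have hnhds : ball 0 r ∈ nhds x := isOpen_ball.mem_nhds (mem_ball_zero_iff.2 hxr)
  have hkernel {z : E} (hz : ‖z‖ < 1) :
      Integrable (fun y : sphere (0 : E) 1 => ballPoissonKernel k z y • g y) μ :=
    (integrable_ballPoissonKernel k hz).smul_bdd C hg hgC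
  refine hasFDerivAt_integral_of_dominated_of_fderiv_le
    (F := fun (z : E) (y : sphere (0 : E) 1) => ballPoissonKernel k z y • g y)
    (F' := fun (z : E) (y : sphere (0 : E) 1) =>
      (innerSL ℝ (ballPoissonKernelGrad k z y)).smulRight (g y))
    (bound := fun _ => (2 * k + 2) / (1 - r) ^ k * C) hnhds ?_ (hkernel hx)
    (integrable_smulRight_ballPoissonKernelGrad k hx hg hgC).1 ?_ (integrable_const _) ?_
  · filter_upwards [hnhds] with z hz using (hkernel (hlt hz)).1
  · filter_upwards [hgC] with y hy z hz
    have hgrad : ‖ballPoissonKernelGrad k z y‖ ≤ (2 * k + 2) / (1 - r) ^ k := by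
      have : 0 < 1 - r := sub_pos.2 hr
      refine (norm_ballPoissonKernelGrad_le k (hlt hz) (norm_eq_of_mem_sphere y)).trans ?_
      gcongr
      exact (mem_ball_zero_iff.1 hz).le
    rw [ContinuousLinearMap.norm_smulRight_apply, innerSL_apply_norm]
    exact mul_le_mul hgrad hy (norm_nonneg _) ((norm_nonneg _).trans hgrad)
  · refine .of_forall fun y z hz => ?_
    have hne := ne_of_norm_lt_one_of_norm_eq_one (hlt hz) (norm_eq_of_mem_sphere y)
    exact (hasFDerivAt_ballPoissonKernel k hne).smul_const (g y)

lemma fderiv_ballPoissonIntegral_apply [IsFiniteMeasure μ] (k : ℕ) (hx : ‖x‖ < 1) {C : ℝ}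
    (hg : AEStronglyMeasurable g μ) (hgC : ∀ᵐ y ∂μ, ‖g y‖ ≤ C) (ℓ : E) :
    fderiv ℝ (ballPoissonIntegral k μ g) x ℓ = ∫ y, ⟪ballPoissonKernelGrad k x y, ℓ⟫ • g y ∂μ := by
  rw [(hasFDerivAt_ballPoissonIntegral k hx hg hgC).fderiv,
    ContinuousLinearMap.integral_apply (integrable_smulRight_ballPoissonKernelGrad k hx hg hgC)]
  simp only [ContinuousLinearMap.smulRight_apply, innerSL_apply_apply]

theorem sharp_directional_derivative_coefficient_ball_general [Nontrivial E] [CompleteSpace F]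
    [Nontrivial F] [IsFiniteMeasure μ] (k : ℕ) (hx : ‖x‖ < 1) :
    IsLeast {c : ℝ | ∀ g : sphere (0 : E) 1 → F, StronglyMeasurable g → (∀ᵐ y ∂μ, ‖g y‖ ≤ 1) →
        ∀ ℓ : E, ‖ℓ‖ = 1 → ‖fderiv ℝ (ballPoissonIntegral k μ g) x ℓ‖ ≤ c}
      (⨆ ℓ : sphere (0 : E) 1, ∫ y, |⟪ballPoissonKernelGrad k x y, (ℓ : E)⟫| ∂μ) := by
  convert isLeast_iSup_integral_abs_inner (F := F)
    (continuous_restrict_sphere_ballPoissonKernelGrad k hx).stronglyMeasurable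
    (integrable_ballPoissonKernelGrad (μ := μ) k hx) using 7 with c g hg hg1 ℓ
  rw [fderiv_ballPoissonIntegral_apply k hx hg.aestronglyMeasurable hg1]

end Integral

section EuclideanBall

/-- The surface measure of the unit sphere divided by `ωₙ`. It absorbs the factor `1 / ωₙ` of the
Poisson integral. -/
def normalizedSurfaceMeasure (n : ℕ) : Measure (sphere (0 : Eu n) 1) :=
  ENNReal.ofReal (1 / sphereArea n) • volume.toSphere

instance (n : ℕ) : IsFiniteMeasure (normalizedSurfaceMeasure n) :=
  Measure.smul_finite _ ENNReal.ofReal_ne_top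

variable {n : ℕ} [NeZero n]

lemma sphereArea_pos : 0 < sphereArea n := by
  unfold sphereArea
  have hn : 0 < (n : ℝ) / 2 := half_pos (Nat.cast_pos.2 (NeZero.pos n))
  exact div_pos (by positivity) (Real.Gamma_pos_of_pos hn)

lemma ae_normalizedSurfaceMeasure_iff {p : sphere (0 : Eu n) 1 → Prop} :
    (∀ᵐ y ∂normalizedSurfaceMeasure n, p y) ↔ ∀ᵐ y ∂(volume : Measure (Eu n)).toSphere, p y :=
  Measure.ae_ennreal_smul_measure_iff
    (ENNReal.ofReal_pos.2 (one_div_pos.2 sphereArea_pos)).ne'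

lemma integral_normalizedSurfaceMeasure {F : Type*} [NormedAddCommGroup F] [NormedSpace ℝ F]
    (f : sphere (0 : Eu n) 1 → F) :
    ∫ y, f y ∂normalizedSurfaceMeasure n = (1 / sphereArea n) • ∫ y, f y ∂volume.toSphere := by
  rw [normalizedSurfaceMeasure, integral_smul_measure,
    ENNReal.toReal_ofReal (one_div_pos.2 sphereArea_pos).le]

lemma poissonBallV_eq_ballPoissonIntegral {m : ℕ} (g : sphere (0 : Eu n) 1 → Eu m) :
    poissonBallV g = ballPoissonIntegral n (normalizedSurfaceMeasure n) g :=
  funext fun _ => (integral_normalizedSurfaceMeasure _).symm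

lemma Kmn_eq_iSup_integral_abs_inner (x : Eu n) :
    Kmn n x = ⨆ ℓ : sphere (0 : Eu n) 1,
      ∫ y, |⟪ballPoissonKernelGrad n x (y : Eu n), (ℓ : Eu n)⟫| ∂normalizedSurfaceMeasure n := by
  simp_rw [integral_normalizedSurfaceMeasure, smul_eq_mul]
  rw [Kmn, Real.mul_iSup_of_nonneg (one_div_pos.2 sphereArea_pos).le]
  simp_rw [ballPoissonKernelGrad, real_inner_smul_left, abs_mul, abs_inv, abs_pow, abs_norm,
    div_eq_inv_mul]

end EuclideanBall

/-- For `n ≥ 2`, `m ≥ 1` and `x` in the open unit ball `𝔹 ⊂ ℝⁿ`, the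
smallest constant `c` such that `max_{|ℓ|=1} |(ℓ,∇)u(x)| ≤ c ‖g‖_{[L^∞(S^{n-1})]^m}`
for every Poisson integral `u` of `g ∈ [L^∞(S^{n-1})]^m` (equivalently, such that
`|(ℓ,∇)u(x)| ≤ c` for all unit `ℓ` whenever `‖g‖_∞ ≤ 1`) equals
`𝒦_{m,n}(x) = (1/ωₙ) sup_{|ℓ|=1} ∫_{S^{n-1}} |(n(1-r²)(y-x) - 2|y-x|²x, ℓ)|/|y-x|^{n+2} dσ_y`,
which does not depend on `m`. -/
theorem sharp_directional_derivative_coefficient_ball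
    (n m : ℕ) (hn : 2 ≤ n) (hm : 1 ≤ m) (x : Eu n) (hx : x ∈ Metric.ball (0 : Eu n) 1) :
    IsLeast {c : ℝ |
        ∀ g : Metric.sphere (0 : Eu n) 1 → Eu m, Measurable g →
          (∀ᵐ y ∂((volume : Measure (Eu n)).toSphere), ‖g y‖ ≤ 1) →
          ∀ ℓ : Eu n, ‖ℓ‖ = 1 → ‖fderiv ℝ (poissonBallV g) x ℓ‖ ≤ c}
      (Kmn n x) := by
  have : NeZero n := ⟨by lia⟩
  have : NeZero m := ⟨by lia⟩
  simpa only [poissonBallV_eq_ballPoissonIntegral, Kmn_eq_iSup_integral_abs_inner,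
    ae_normalizedSurfaceMeasure_iff, stronglyMeasurable_iff_measurable] using
    sharp_directional_derivative_coefficient_ball_general (F := Eu m)
      (μ := normalizedSurfaceMeasure n) n (mem_ball_zero_iff.1 hx)
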